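/- Boundedness of the supply duals in Stage One: for every iteration t and every impression i with Γ(i) ≠ ∅, β^t_i ≤ max_{j∈Γ(i)}(p_j + V_j), and β^t_i = 0 when Γ(i) = ∅; consequently, for every i the nondecreasing sequence (β^t_i)_{t≥0} converges as t → ∞. -/

import Mathlib

open Finset Filter Topology

noncomputable section

variable {I J : Type*} [Fintype I] [Fintype J]

open Classical in
/-- Γ(j): the impressions eligible for contract `j`. -/
def GammaD (adj : I → J → Prop) (j : J) : Finset I :=
  Finset.univ.filter (fun i => adj i j)

open Classical in
/-- Γ(i): the contracts eligible for impression `i`. -/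
def GammaS (adj : I → J → Prop) (i : I) : Finset J :=
  Finset.univ.filter (fun j => adj i j)

/-- Total eligible supply `S_j = ∑_{i ∈ Γ(j)} s_i`. -/
def Stot (adj : I → J → Prop) (s : I → ℝ) (j : J) : ℝ :=
  ∑ i ∈ GammaD adj j, s i

/-- Target `θ_{ij} = d_j / S_j` (independent of `i`). -/
def theta (adj : I → J → Prop) (s : I → ℝ) (d : J → ℝ) (j : J) : ℝ :=
  d j / Stot adj s j

/-- `g_{ij}(z) = max {0, θ_{ij} (1 + z / V_j)}` (independent of `i`). -/
def gfun (adj : I → J → Prop) (s : I → ℝ) (d V : J → ℝ) (j : J) (z : ℝ) : ℝ :=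
  max 0 ((theta adj s d j) * (1 + z / V j))

/-- `b` is a valid supply dual `β_i` for demand duals `α`: `b ≥ 0` and either `b = 0` with
`∑_{j ∈ Γ(i)} g_{ij}(α_j) ≤ 1`, or `∑_{j ∈ Γ(i)} g_{ij}(α_j − b) = 1`. -/
def BetaSpec (adj : I → J → Prop) (s : I → ℝ) (d V : J → ℝ)
    (α : J → ℝ) (i : I) (b : ℝ) : Prop :=
  0 ≤ b ∧ ((b = 0 ∧ ∑ j ∈ GammaS adj i, gfun adj s d V j (α j) ≤ 1) ∨
    ∑ j ∈ GammaS adj i, gfun adj s d V j (α j - b) = 1)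

/-- Stage One of SHALE: `α⁰ = 0`; `β^t_i` is a valid supply dual for `α^t`; and
`α^{t+1}_j = min (p_j) a_j` where `a_j` solves `∑_{i ∈ Γ(j)} s_i g_{ij}(a_j − β^t_i) = d_j`. -/
def StageOne (adj : I → J → Prop) (s : I → ℝ) (d p V : J → ℝ)
    (α : ℕ → J → ℝ) (β : ℕ → I → ℝ) : Prop :=
  (∀ j, α 0 j = 0) ∧
  (∀ t i, BetaSpec adj s d V (α t) i (β t i)) ∧
  (∀ t j, ∃ a : ℝ,
    (∑ i ∈ GammaD adj j, s i * gfun adj s d V j (a - β t i) = d j) ∧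
    α (t + 1) j = min (p j) a)

/-- Projected delivery `d_j(α) = ∑_{i ∈ Γ(j)} s_i g_{ij}(α_j − β_i)`. -/
def Dproj (adj : I → J → Prop) (s : I → ℝ) (d V : J → ℝ)
    (α : J → ℝ) (β : I → ℝ) (j : J) : ℝ :=
  ∑ i ∈ GammaD adj j, s i * gfun adj s d V j (α j - β i)

/-- The objective of the allocation problem. -/
def Fobj (adj : I → J → Prop) (s : I → ℝ) (d p V : J → ℝ)
    (x : I → J → ℝ) (u : J → ℝ) : ℝ :=
  (1 / 2) * ∑ j, ∑ i ∈ GammaD adj j,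
      s i * (V j / theta adj s d j) * (x i j - theta adj s d j) ^ 2
    + ∑ j, p j * u j

/-- Feasibility for the allocation problem. -/
def Feasible (adj : I → J → Prop) (s : I → ℝ) (d : J → ℝ)
    (x : I → J → ℝ) (u : J → ℝ) : Prop :=
  (∀ j, d j ≤ ∑ i ∈ GammaD adj j, s i * x i j + u j) ∧
  (∀ i, ∑ j ∈ GammaS adj i, x i j ≤ 1) ∧
  (∀ i j, adj i j → 0 ≤ x i j) ∧
  (∀ j, 0 ≤ u j)

/-- The KKT conditions for duals `(α, β)`. -/
def KKT (adj : I → J → Prop) (s : I → ℝ) (d p V : J → ℝ)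
    (α : J → ℝ) (β : I → ℝ) : Prop :=
  (∀ j, 0 ≤ α j ∧ α j ≤ p j) ∧
  (∀ i, 0 ≤ β i ∧ (∑ j ∈ GammaS adj i, gfun adj s d V j (α j - β i) ≤ 1) ∧
    (0 < β i → ∑ j ∈ GammaS adj i, gfun adj s d V j (α j - β i) = 1)) ∧
  (∀ j, (∑ i ∈ GammaD adj j, s i * gfun adj s d V j (α j - β i) ≤ d j) ∧
    (α j < p j → ∑ i ∈ GammaD adj j, s i * gfun adj s d V j (α j - β i) = d j))

/-!
Each `g_{ij}` is nondecreasing, and strictly increasing where it is positive. An equation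
`∑ g = c > 0` therefore determines its unknown monotonically: supply duals grow with the demand
duals, and demand duals grow with the supply duals, so Stage One, started at `α = 0`, is a
nondecreasing iteration. A positive `β_i` requires some `j ∈ Γ(i)` with `g_{ij}(α_j - β_i) > 0`,
that is `β_i < α_j + V_j ≤ p_j + V_j`, so the iteration is bounded and hence converges.
-/

section Comparison

variable {ι α M R : Type*}

theorem strictMonoOn_max_const [Preorder α] [LinearOrder M] {f : α → M} (hf : StrictMono f)
    (c : M) : StrictMonoOn (fun z ↦ max c (f z)) {z | c < max c (f z)} := by
  intro x hx y _ hxy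
  have hcx : c < f x := by simpa using hx
  exact max_lt_iff.2 ⟨lt_max_of_lt_right (hcx.trans (hf hxy)), lt_max_of_lt_right (hf hxy)⟩

theorem strictMonoOn_const_mul_of_nonneg [Preorder α] [Semiring R] [LinearOrder R]
    [IsStrictOrderedRing R] {f : α → R} {w : R} (hw : 0 ≤ w) (hf : StrictMonoOn f {z | 0 < f z}) :
    StrictMonoOn (fun z ↦ w * f z) {z | 0 < w * f z} := by
  intro x hx y hy hxy
  have hfx : 0 < f x := pos_of_mul_pos_right hx hw
  have hfy : 0 < f y := pos_of_mul_pos_right hy hw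
  exact mul_lt_mul_of_pos_left (hf hfx hfy hxy) (pos_of_mul_pos_left hx hfx.le)

theorem sum_apply_lt_sum_apply [Preorder α] [AddCommMonoid M] [LinearOrder M]
    [IsOrderedCancelAddMonoid M] {t : Finset ι} {f : ι → α → M} {x y : ι → α}
    (hmono : ∀ k ∈ t, Monotone (f k)) (hstrict : ∀ k ∈ t, StrictMonoOn (f k) {z | 0 < f k z})
    (hxy : ∀ k ∈ t, x k < y k) (hpos : 0 < ∑ k ∈ t, f k (x k)) :
    ∑ k ∈ t, f k (x k) < ∑ k ∈ t, f k (y k) := by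
  have hle : ∀ k ∈ t, f k (x k) ≤ f k (y k) := fun k hk ↦ hmono k hk (hxy k hk).le
  obtain ⟨k, hk, hkpos⟩ : ∃ k ∈ t, 0 < f k (x k) :=
    exists_lt_of_sum_lt (by simpa only [sum_const_zero] using hpos)
  exact sum_lt_sum hle ⟨k, hk, hstrict k hk hkpos (hkpos.trans_le (hle k hk)) (hxy k hk)⟩

end Comparison

section Demand

omit [Fintype J]

variable {adj : I → J → Prop} {s : I → ℝ} {d V : J → ℝ} {j : J}

theorem theta_pos (hd : 0 < d j) (hS : 0 < Stot adj s j) : 0 < theta adj s d j :=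
  div_pos hd hS

theorem sum_mul_theta (hS : Stot adj s j ≠ 0) :
    ∑ i ∈ GammaD adj j, s i * theta adj s d j = d j := by
  rw [← sum_mul]
  exact mul_div_cancel₀ (d j) hS

theorem gfun_zero (hθ : 0 ≤ theta adj s d j) : gfun adj s d V j 0 = theta adj s d j := by
  simp [gfun, hθ]

theorem strictMono_theta_mul_one_add_div (hθ : 0 < theta adj s d j) (hV : 0 < V j) :
    StrictMono fun z ↦ theta adj s d j * (1 + z / V j) := by
  intro x y hxy
  dsimp only
  gcongr

theorem monotone_gfun (hθ : 0 < theta adj s d j) (hV : 0 < V j) :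
    Monotone (gfun adj s d V j) :=
  monotone_const.max (strictMono_theta_mul_one_add_div hθ hV).monotone

theorem strictMonoOn_gfun (hθ : 0 < theta adj s d j) (hV : 0 < V j) :
    StrictMonoOn (gfun adj s d V j) {z | 0 < gfun adj s d V j z} :=
  strictMonoOn_max_const (strictMono_theta_mul_one_add_div hθ hV) 0

theorem gfun_pos_iff (hθ : 0 < theta adj s d j) (hV : 0 < V j) {z : ℝ} :
    0 < gfun adj s d V j z ↔ -V j < z := by
  rw [gfun, lt_max_iff, or_iff_right (lt_irrefl 0), mul_pos_iff_of_pos_left hθ,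
    ← neg_lt_iff_pos_add', lt_div_iff₀ hV, neg_one_mul]

theorem le_of_sum_mul_gfun_le (hs : ∀ i ∈ GammaD adj j, 0 ≤ s i) (hθ : 0 < theta adj s d j)
    (hV : 0 < V j) {b b' : I → ℝ} (hb : ∀ i ∈ GammaD adj j, b i ≤ b' i) {a a' : ℝ}
    (hpos : 0 < ∑ i ∈ GammaD adj j, s i * gfun adj s d V j (a' - b' i))
    (hle : ∑ i ∈ GammaD adj j, s i * gfun adj s d V j (a - b i) ≤
      ∑ i ∈ GammaD adj j, s i * gfun adj s d V j (a' - b' i)) :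
    a ≤ a' := by
  by_contra! hlt
  exact hle.not_gt <| sum_apply_lt_sum_apply (f := fun i z ↦ s i * gfun adj s d V j z)
    (fun i hi ↦ (monotone_gfun hθ hV).const_mul (hs i hi))
    (fun i hi ↦ strictMonoOn_const_mul_of_nonneg (hs i hi) (strictMonoOn_gfun hθ hV))
    (fun i hi ↦ by linarith [hb i hi]) hpos

end Demand

namespace BetaSpec

variable {adj : I → J → Prop} {s : I → ℝ} {d V : J → ℝ} {a a' : J → ℝ} {i : I} {b b' : ℝ}

theorem sum_gfun_le_one (h : BetaSpec adj s d V a i b) :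
    ∑ j ∈ GammaS adj i, gfun adj s d V j (a j - b) ≤ 1 := by
  obtain ⟨-, ⟨rfl, hle⟩ | heq⟩ := h
  · simpa only [sub_zero] using hle
  · exact heq.le

theorem sum_gfun_eq_one (h : BetaSpec adj s d V a i b) (hb : 0 < b) :
    ∑ j ∈ GammaS adj i, gfun adj s d V j (a j - b) = 1 :=
  h.2.resolve_left fun h0 ↦ hb.ne' h0.1

theorem mono (hθ : ∀ j ∈ GammaS adj i, 0 < theta adj s d j) (hV : ∀ j ∈ GammaS adj i, 0 < V j)
    (haa' : ∀ j ∈ GammaS adj i, a j ≤ a' j) (h : BetaSpec adj s d V a i b)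
    (h' : BetaSpec adj s d V a' i b') : b ≤ b' := by
  by_contra! hlt
  have hsum := h.sum_gfun_eq_one (h'.1.trans_lt hlt)
  have hsum_lt : ∑ j ∈ GammaS adj i, gfun adj s d V j (a j - b) <
      ∑ j ∈ GammaS adj i, gfun adj s d V j (a' j - b') :=
    sum_apply_lt_sum_apply (fun j hj ↦ monotone_gfun (hθ j hj) (hV j hj))
      (fun j hj ↦ strictMonoOn_gfun (hθ j hj) (hV j hj))
      (fun j hj ↦ by linarith [haa' j hj]) (hsum ▸ one_pos)
  exact (hsum ▸ hsum_lt).not_ge h'.sum_gfun_le_one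

theorem exists_lt_add (hθ : ∀ j ∈ GammaS adj i, 0 < theta adj s d j)
    (hV : ∀ j ∈ GammaS adj i, 0 < V j) (h : BetaSpec adj s d V a i b) (hb : 0 < b) :
    ∃ j ∈ GammaS adj i, b < a j + V j := by
  obtain ⟨j, hj, hpos⟩ : ∃ j ∈ GammaS adj i, 0 < gfun adj s d V j (a j - b) :=
    exists_lt_of_sum_lt (by simp only [sum_const_zero, h.sum_gfun_eq_one hb, one_pos])
  have hgap : -V j < a j - b := (gfun_pos_iff (hθ j hj) (hV j hj)).1 hpos
  exact ⟨j, hj, by linarith⟩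

theorem le_sup'_add (hθ : ∀ j ∈ GammaS adj i, 0 < theta adj s d j)
    (hV : ∀ j ∈ GammaS adj i, 0 < V j) {p : J → ℝ} (hp : ∀ j ∈ GammaS adj i, 0 ≤ p j)
    (hap : ∀ j ∈ GammaS adj i, a j ≤ p j) (h : BetaSpec adj s d V a i b)
    (hne : (GammaS adj i).Nonempty) : b ≤ (GammaS adj i).sup' hne fun j ↦ p j + V j := by
  rw [Finset.le_sup'_iff]
  rcases h.1.eq_or_lt with rfl | hb
  · obtain ⟨j, hj⟩ := hne
    exact ⟨j, hj, add_nonneg (hp j hj) (hV j hj).le⟩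
  · obtain ⟨j, hj, hlt⟩ := h.exists_lt_add hθ hV hb
    exact ⟨j, hj, hlt.le.trans (add_le_add_left (hap j hj) (V j))⟩

theorem eq_zero_of_gammaS_eq_empty (h : BetaSpec adj s d V a i b) (hi : GammaS adj i = ∅) :
    b = 0 := by
  refine (h.2.resolve_right ?_).1
  simp only [hi, sum_empty, zero_ne_one, not_false_eq_true]

end BetaSpec

namespace StageOne

variable {adj : I → J → Prop} {s : I → ℝ} {d p V : J → ℝ} {α : ℕ → J → ℝ} {β : ℕ → I → ℝ}

theorem alpha_le (h : StageOne adj s d p V α β) {j : J} (hp : 0 ≤ p j) : ∀ t, α t j ≤ p j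
  | 0 => (h.1 j).trans_le hp
  | t + 1 => by
    obtain ⟨a, -, hα⟩ := h.2.2 t j
    exact hα.trans_le (min_le_left _ _)

theorem zero_le_alpha_one (h : StageOne adj s d p V α β) {j : J}
    (hs : ∀ i ∈ GammaD adj j, 0 ≤ s i) (hd : 0 < d j) (hp : 0 ≤ p j) (hV : 0 < V j)
    (hS : 0 < Stot adj s j) : 0 ≤ α 1 j := by
  obtain ⟨a, ha, hα⟩ := h.2.2 0 j
  have hθ := theta_pos hd hS
  have hzero : ∑ i ∈ GammaD adj j, s i * gfun adj s d V j (0 - 0) = d j := by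
    rw [sub_zero, gfun_zero hθ.le, sum_mul_theta hS.ne']
  rw [hα]
  exact le_min hp <| le_of_sum_mul_gfun_le (b := 0) hs hθ hV (fun i _ ↦ (h.2.1 0 i).1)
    (ha.symm ▸ hd) (hzero.trans ha.symm).le

theorem alpha_succ_le_alpha_succ (h : StageOne adj s d p V α β) {j : J}
    (hs : ∀ i ∈ GammaD adj j, 0 ≤ s i) (hd : 0 < d j) (hV : 0 < V j)
    (hS : 0 < Stot adj s j) {t u : ℕ} (hβ : ∀ i ∈ GammaD adj j, β t i ≤ β u i) :
    α (t + 1) j ≤ α (u + 1) j := by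
  obtain ⟨a, ha, hα⟩ := h.2.2 t j
  obtain ⟨a', ha', hα'⟩ := h.2.2 u j
  rw [hα, hα']
  exact min_le_min_left (p j) <| le_of_sum_mul_gfun_le hs (theta_pos hd hS) hV hβ (ha'.symm ▸ hd)
    (ha.trans ha'.symm).le

theorem beta_le_beta (h : StageOne adj s d p V α β) (hd : ∀ j, 0 < d j) (hV : ∀ j, 0 < V j)
    (hS : ∀ j, 0 < Stot adj s j) {t u : ℕ} (hα : α t ≤ α u) : β t ≤ β u := fun i ↦
  BetaSpec.mono (fun j _ ↦ theta_pos (hd j) (hS j)) (fun j _ ↦ hV j) (fun j _ ↦ hα j)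
    (h.2.1 t i) (h.2.1 u i)

theorem monotone_alpha (h : StageOne adj s d p V α β) (hs : ∀ i, 0 ≤ s i) (hd : ∀ j, 0 < d j)
    (hp : ∀ j, 0 ≤ p j) (hV : ∀ j, 0 < V j) (hS : ∀ j, 0 < Stot adj s j) : Monotone α := by
  refine monotone_nat_of_le_succ fun t ↦ ?_
  induction t with
  | zero =>
    intro j
    rw [h.1 j]
    exact h.zero_le_alpha_one (fun i _ ↦ hs i) (hd j) (hp j) (hV j) (hS j)
  | succ t ih =>
    exact fun j ↦ h.alpha_succ_le_alpha_succ (fun i _ ↦ hs i) (hd j) (hV j) (hS j)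
      fun i _ ↦ h.beta_le_beta hd hV hS ih i

theorem monotone_beta (h : StageOne adj s d p V α β) (hs : ∀ i, 0 ≤ s i) (hd : ∀ j, 0 < d j)
    (hp : ∀ j, 0 ≤ p j) (hV : ∀ j, 0 < V j) (hS : ∀ j, 0 < Stot adj s j) : Monotone β :=
  fun _ _ htu ↦ h.beta_le_beta hd hV hS (h.monotone_alpha hs hd hp hV hS htu)

end StageOne

theorem shale_beta_bounded_converges
    (adj : I → J → Prop) (s : I → ℝ) (d p V : J → ℝ)
    (hs : ∀ i, 0 < s i) (hd : ∀ j, 0 < d j) (hp : ∀ j, 0 < p j) (hV : ∀ j, 0 < V j)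
    (hS : ∀ j, 0 < Stot adj s j)
    (α : ℕ → J → ℝ) (β : ℕ → I → ℝ) (hstage : StageOne adj s d p V α β) :
    (∀ t i, ∀ h : (GammaS adj i).Nonempty,
      β t i ≤ (GammaS adj i).sup' h (fun j => p j + V j)) ∧
    (∀ t i, GammaS adj i = ∅ → β t i = 0) ∧
    (∀ i, ∃ L : ℝ, Filter.Tendsto (fun t => β t i) Filter.atTop (𝓝 L)) := by
  have hθ : ∀ j, 0 < theta adj s d j := fun j ↦ theta_pos (hd j) (hS j)
  have hβ : ∀ t i, BetaSpec adj s d V (α t) i (β t i) := hstage.2.1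
  have hbound : ∀ t i, ∀ h : (GammaS adj i).Nonempty,
      β t i ≤ (GammaS adj i).sup' h fun j ↦ p j + V j := fun t i ↦
    (hβ t i).le_sup'_add (fun j _ ↦ hθ j) (fun j _ ↦ hV j) (fun j _ ↦ (hp j).le)
      fun j _ ↦ hstage.alpha_le (hp j).le t
  have hempty : ∀ t i, GammaS adj i = ∅ → β t i = 0 := fun t i ↦
    (hβ t i).eq_zero_of_gammaS_eq_empty
  have hmono : Monotone β :=
    hstage.monotone_beta (fun i ↦ (hs i).le) hd (fun j ↦ (hp j).le) hV hS
  refine ⟨hbound, hempty, fun i ↦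
    ⟨_, tendsto_atTop_ciSup (fun _ _ htu ↦ hmono htu i) ?_⟩⟩
  rcases (GammaS adj i).eq_empty_or_nonempty with hi | hi
  · exact ⟨0, Set.forall_mem_range.2 fun t ↦ (hempty t i hi).le⟩
  · exact ⟨_, Set.forall_mem_range.2 fun t ↦ hbound t i hi⟩

end
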